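/- The mixed relation τ₁σ₂σ₁ = σ₂σ₁τ₂ of the singular braid monoid holds for the Yang–Baxter matrices: (Q ⊗ I)·(I ⊗ R)·(R ⊗ I) = (I ⊗ R)·(R ⊗ I)·(I ⊗ Q), where I is the n×n identity matrix, ⊗ is the Kronecker product of matrices (so both sides are matrices indexed by (Fin n × Fin n) × Fin n), and · is matrix multiplication. -/

import Mathlib

open LaurentPolynomial Matrix Finset

/-- The Yang-Baxter matrix `R` for a positive crossing. -/
noncomputable def Rmat (n : ℕ) : Matrix (Fin n × Fin n) (Fin n × Fin n) (LaurentPolynomial ℤ) :=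
  fun p r =>
    if p.1 = r.1 ∧ p.2 = r.2 ∧ p.1 < p.2 then T 1 - T (-1)
    else if p.1 = p.2 ∧ p.2 = r.1 ∧ r.1 = r.2 then T 1
    else if p.1 = r.2 ∧ p.2 = r.1 ∧ p.1 ≠ p.2 then 1
    else 0

/-- The Yang-Baxter matrix `R̄` for a negative crossing. -/
noncomputable def Rbar (n : ℕ) : Matrix (Fin n × Fin n) (Fin n × Fin n) (LaurentPolynomial ℤ) :=
  fun p r =>
    if p.1 = r.1 ∧ p.2 = r.2 ∧ p.2 < p.1 then T (-1) - T 1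
    else if p.1 = p.2 ∧ p.2 = r.1 ∧ r.1 = r.2 then T (-1)
    else if p.1 = r.2 ∧ p.2 = r.1 ∧ p.1 ≠ p.2 then 1
    else 0

/-- The matrix `Q` for a singular crossing. -/
noncomputable def Qmat (n : ℕ) : Matrix (Fin n × Fin n) (Fin n × Fin n) (LaurentPolynomial ℤ) :=
  fun p r =>
    if p.1 = p.2 ∧ p.2 = r.1 ∧ r.1 = r.2 then T 1 + T (-1)
    else if p.1 = r.1 ∧ p.2 = r.2 ∧ p.1 < p.2 then T 1
    else if p.1 = r.1 ∧ p.2 = r.2 ∧ p.2 < p.1 then T (-1)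
    else if p.1 = r.2 ∧ p.2 = r.1 ∧ p.1 ≠ p.2 then 1
    else 0

/-- The spin of the index `i ∈ Fin n`: the corresponding element of
`{1-n, 3-n, …, n-3, n-1}`. -/
def spin (n : ℕ) (i : Fin n) : ℤ := 2 * (i : ℤ) - ((n : ℤ) - 1)

/-- The quantum integer `[m] = q^{m-1} + q^{m-3} + ⋯ + q^{1-m}`. -/
noncomputable def qint (m : ℕ) : LaurentPolynomial ℤ :=
  ∑ k ∈ Finset.range m, T (2 * (k : ℤ) - ((m : ℤ) - 1))

/-- `R ⊗ I`, as a matrix indexed by `(Fin n × Fin n) × Fin n`. -/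
noncomputable def RI (n : ℕ) :
    Matrix ((Fin n × Fin n) × Fin n) ((Fin n × Fin n) × Fin n) (LaurentPolynomial ℤ) :=
  Matrix.kronecker (Rmat n) (1 : Matrix (Fin n) (Fin n) (LaurentPolynomial ℤ))

/-- `I ⊗ R`, reindexed so that it is also a matrix indexed by `(Fin n × Fin n) × Fin n`. -/
noncomputable def IR (n : ℕ) :
    Matrix ((Fin n × Fin n) × Fin n) ((Fin n × Fin n) × Fin n) (LaurentPolynomial ℤ) :=
  Matrix.reindex (Equiv.prodAssoc (Fin n) (Fin n) (Fin n)).symm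
    (Equiv.prodAssoc (Fin n) (Fin n) (Fin n)).symm
    (Matrix.kronecker (1 : Matrix (Fin n) (Fin n) (LaurentPolynomial ℤ)) (Rmat n))

/-- `Q ⊗ I`, as a matrix indexed by `(Fin n × Fin n) × Fin n`. -/
noncomputable def QI (n : ℕ) :
    Matrix ((Fin n × Fin n) × Fin n) ((Fin n × Fin n) × Fin n) (LaurentPolynomial ℤ) :=
  Matrix.kronecker (Qmat n) (1 : Matrix (Fin n) (Fin n) (LaurentPolynomial ℤ))

/-- `I ⊗ Q`, reindexed so that it is also a matrix indexed by `(Fin n × Fin n) × Fin n`. -/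
noncomputable def IQ (n : ℕ) :
    Matrix ((Fin n × Fin n) × Fin n) ((Fin n × Fin n) × Fin n) (LaurentPolynomial ℤ) :=
  Matrix.reindex (Equiv.prodAssoc (Fin n) (Fin n) (Fin n)).symm
    (Equiv.prodAssoc (Fin n) (Fin n) (Fin n)).symm
    (Matrix.kronecker (1 : Matrix (Fin n) (Fin n) (LaurentPolynomial ℤ)) (Qmat n))

/-!
The Yang–Baxter matrix is the tensor swap plus a diagonal matrix,
`(R v) (a, b) = v (b, a) + w a b * v (a, b)`. For any weight `w`, the two sides of the braid
relation between `R ⊗ I` and `I ⊗ R` have the same terms in the 3-cycles and in the longest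
permutation, so their difference at `((a, b), c)` involves only `v ((b, a), c)`, `v ((a, c), b)` and
`v ((a, b), c)`. For the Yang–Baxter weight each of these three coefficients vanishes when `a ≠ b`
and `b ≠ c`; when `a = b` or `b = c`, values coincide and their coefficients cancel because
`w` satisfies `w ^ 2 = (q - q⁻¹) * w` off the diagonal and equals `q - 1` on it. Since
`Q = R + q⁻¹ • 1`, the mixed relation arises from the braid relation by adding a scalar to an outer
factor on each side.
-/

open scoped Kronecker

theorem add_mul_mul_eq_mul_mul_add_of_braid {A : Type*} [NonUnitalSemiring A] {a b c : A}
    (h : a * b * a = b * a * b) (hc : Commute c (b * a)) :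
    (a + c) * b * a = b * a * (b + c) := by
  rw [add_mul, add_mul, mul_add, h, mul_assoc c, hc.eq]

section Embeddings

variable {ι K : Type*} [DecidableEq ι] [Semiring K]

/-- `A ⊗ I`: the matrix `A` acting on the first two of three tensor factors. -/
def onFirstTwo (A : Matrix (ι × ι) (ι × ι) K) :
    Matrix ((ι × ι) × ι) ((ι × ι) × ι) K :=
  A ⊗ₖ 1

/-- `I ⊗ A`: the matrix `A` acting on the last two of three tensor factors, reindexed to the same
left-bracketed index type as `onFirstTwo A`. -/
def onLastTwo (A : Matrix (ι × ι) (ι × ι) K) :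
    Matrix ((ι × ι) × ι) ((ι × ι) × ι) K :=
  reindex (Equiv.prodAssoc ι ι ι).symm (Equiv.prodAssoc ι ι ι).symm (1 ⊗ₖ A)

theorem onFirstTwo_add_smul_one (A : Matrix (ι × ι) (ι × ι) K) (r : K) :
    onFirstTwo (A + r • 1) = onFirstTwo A + r • 1 := by
  simp only [onFirstTwo, add_kronecker, smul_kronecker, one_kronecker_one]

theorem onLastTwo_add_smul_one {K : Type*} [CommSemiring K]
    (A : Matrix (ι × ι) (ι × ι) K) (r : K) :
    onLastTwo (A + r • 1) = onLastTwo A + r • 1 := by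
  simp only [onLastTwo, kronecker_add, kronecker_smul, one_kronecker_one, reindex_apply,
    submatrix_add, submatrix_smul, Pi.add_apply, Pi.smul_apply, submatrix_one_equiv]

variable [Fintype ι]

theorem onFirstTwo_mulVec_apply (A : Matrix (ι × ι) (ι × ι) K) (v : (ι × ι) × ι → K)
    (a b c : ι) :
    (onFirstTwo A *ᵥ v) ((a, b), c) = (A *ᵥ fun x => v (x, c)) (a, b) := by
  simp [onFirstTwo, mulVec, dotProduct, Fintype.sum_prod_type, one_apply]

theorem onLastTwo_mulVec_apply (A : Matrix (ι × ι) (ι × ι) K) (v : (ι × ι) × ι → K)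
    (a b c : ι) :
    (onLastTwo A *ᵥ v) ((a, b), c) = (A *ᵥ fun x => v ((a, x.1), x.2)) (b, c) := by
  simp [onLastTwo, mulVec, dotProduct, Fintype.sum_prod_type, one_apply]

end Embeddings

section SwapAddDiagonal

variable {ι K : Type*} [DecidableEq ι] [CommRing K]

/-- The tensor swap plus the diagonal matrix with entry `w a b` at `(a, b)`. -/
def swapAddDiagonal (w : ι → ι → K) : Matrix (ι × ι) (ι × ι) K :=
  Equiv.Perm.permMatrix K (Equiv.prodComm ι ι) + diagonal fun x => w x.1 x.2

variable [Fintype ι]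

theorem swapAddDiagonal_mulVec_apply (w : ι → ι → K) (v : ι × ι → K) (a b : ι) :
    (swapAddDiagonal w *ᵥ v) (a, b) = v (b, a) + w a b * v (a, b) := by
  simp [swapAddDiagonal, add_mulVec, permMatrix_mulVec, mulVec_diagonal]

theorem swapAddDiagonal_braid_sub_mulVec_apply (w : ι → ι → K) (v : (ι × ι) × ι → K)
    (a b c : ι) :
    let A := onFirstTwo (swapAddDiagonal w)
    let B := onLastTwo (swapAddDiagonal w)
    ((A * B * A - B * A * B) *ᵥ v) ((a, b), c) =
      (w a b * w b c + w a c * w b a - w b c * w a c) * v ((b, a), c) +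
      (w a b * w a c - w b c * w a b - w a c * w c b) * v ((a, c), b) +
      w a b * w b c * (w a b - w b c) * v ((a, b), c) := by
  simp only [sub_mulVec, ← mulVec_mulVec, Pi.sub_apply, onFirstTwo_mulVec_apply,
    onLastTwo_mulVec_apply, swapAddDiagonal_mulVec_apply]
  ring

end SwapAddDiagonal

section CrossingWeight

variable {ι K : Type*} [LinearOrder ι] [CommRing K]

/-- The diagonal weight of the Yang–Baxter matrix for a positive crossing, with `p` in the role of
`q⁻¹`. On the diagonal it is `q - 1` because the swap already contributes `1` there. -/
def crossingWeight (q p : K) (a b : ι) : K :=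
  if a < b then q - p else if a = b then q - 1 else 0

variable (q p : K) {a b c : ι}

theorem crossingWeight_self : crossingWeight q p a a = q - 1 := by
  simp [crossingWeight]

theorem crossingWeight_mul_swap (h : a ≠ b) :
    crossingWeight q p a b * crossingWeight q p b a = 0 := by
  grind [crossingWeight]

theorem crossingWeight_mul_self (h : a ≠ b) :
    crossingWeight q p a b * crossingWeight q p a b = (q - p) * crossingWeight q p a b := by
  grind [crossingWeight]

theorem crossingWeight_mul_add_mul_swap_left (hab : a ≠ b) (hbc : b ≠ c) :
    crossingWeight q p a b * crossingWeight q p b c +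
      crossingWeight q p a c * crossingWeight q p b a =
        crossingWeight q p b c * crossingWeight q p a c := by
  grind [crossingWeight]

theorem crossingWeight_mul_add_mul_swap_right (hab : a ≠ b) (hbc : b ≠ c) :
    crossingWeight q p b c * crossingWeight q p a b +
      crossingWeight q p a c * crossingWeight q p c b =
        crossingWeight q p a b * crossingWeight q p a c := by
  grind [crossingWeight]

end CrossingWeight

section Crossing

variable {K : Type*} [CommRing K]

/-- The Yang–Baxter matrix of a positive crossing over any linearly ordered index type, with `p` in
the role of `q⁻¹`. -/
def crossingMatrix (ι : Type*) [LinearOrder ι] (q p : K) : Matrix (ι × ι) (ι × ι) K :=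
  swapAddDiagonal (crossingWeight q p)

/-- The matrix of a singular crossing, encoded as its resolution `R + q⁻¹ • 1`, with `p` in the role
of `q⁻¹`. -/
def singularCrossingMatrix (ι : Type*) [LinearOrder ι] (q p : K) : Matrix (ι × ι) (ι × ι) K :=
  crossingMatrix ι q p + p • 1

variable {ι : Type*} [LinearOrder ι] [Fintype ι] {q p : K}

theorem crossingMatrix_braid (hqp : q * p = 1) :
    let A := onFirstTwo (crossingMatrix ι q p)
    let B := onLastTwo (crossingMatrix ι q p)
    A * B * A = B * A * B := by
  refine sub_eq_zero.mp (ext_iff_mulVec.mpr fun v => ?_)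
  ext ⟨⟨a, b⟩, c⟩
  rw [crossingMatrix, swapAddDiagonal_braid_sub_mulVec_apply, zero_mulVec, Pi.zero_apply]
  obtain rfl | hab := eq_or_ne a b
  · obtain rfl | hac := eq_or_ne a c
    · ring
    · rw [crossingWeight_self]
      linear_combination crossingWeight q p a c * v ((a, a), c) * hqp -
        q * v ((a, a), c) * crossingWeight_mul_self q p hac -
        v ((a, c), a) * crossingWeight_mul_swap q p hac
  · obtain rfl | hbc := eq_or_ne b c
    · rw [crossingWeight_self]
      linear_combination q * v ((a, b), b) * crossingWeight_mul_self q p hab +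
        v ((b, a), b) * crossingWeight_mul_swap q p hab -
        crossingWeight q p a b * v ((a, b), b) * hqp
    · linear_combination
        v ((b, a), c) * crossingWeight_mul_add_mul_swap_left q p hab hbc -
        v ((a, c), b) * crossingWeight_mul_add_mul_swap_right q p hab hbc +
        v ((a, b), c) * (crossingWeight q p b c * crossingWeight_mul_self q p hab -
          crossingWeight q p a b * crossingWeight_mul_self q p hbc)

theorem mixed_relation_pos_general (hqp : q * p = 1) :
    onFirstTwo (singularCrossingMatrix ι q p) * onLastTwo (crossingMatrix ι q p) *
        onFirstTwo (crossingMatrix ι q p) =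
      onLastTwo (crossingMatrix ι q p) * onFirstTwo (crossingMatrix ι q p) *
        onLastTwo (singularCrossingMatrix ι q p) := by
  rw [singularCrossingMatrix, onFirstTwo_add_smul_one, onLastTwo_add_smul_one]
  exact add_mul_mul_eq_mul_mul_add_of_braid (crossingMatrix_braid hqp)
    ((Commute.one_left _).smul_left p)

end Crossing

theorem Rmat_eq_crossingMatrix (n : ℕ) : Rmat n = crossingMatrix (Fin n) (T 1) (T (-1)) := by
  ext ⟨a, b⟩ ⟨c, d⟩ : 1
  simp only [Rmat, crossingMatrix, swapAddDiagonal, crossingWeight, Matrix.add_apply,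
    diagonal_apply, PEquiv.toMatrix_apply, Equiv.toPEquiv_apply, Equiv.prodComm_apply,
    Prod.swap_prod_mk, Option.mem_some_iff, Prod.mk.injEq]
  grind

theorem Qmat_eq_singularCrossingMatrix (n : ℕ) :
    Qmat n = singularCrossingMatrix (Fin n) (T 1) (T (-1)) := by
  rw [singularCrossingMatrix, ← Rmat_eq_crossingMatrix]
  ext ⟨a, b⟩ ⟨c, d⟩ : 1
  simp only [Qmat, Rmat, Matrix.add_apply, Matrix.smul_apply, one_apply, Prod.mk.injEq, smul_eq_mul]
  grind

/-- The mixed relation `(Q ⊗ I)(I ⊗ R)(R ⊗ I) = (I ⊗ R)(R ⊗ I)(I ⊗ Q)`. -/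
theorem mixed_relation_pos (n : ℕ) (hn : 2 ≤ n) :
    QI n * IR n * RI n = IR n * RI n * IQ n := by
  have hT : (T 1 : LaurentPolynomial ℤ) * T (-1) = 1 := by rw [← T_add, add_neg_cancel, T_zero]
  have h := mixed_relation_pos_general (ι := Fin n) hT
  rwa [← Rmat_eq_crossingMatrix, ← Qmat_eq_singularCrossingMatrix] at h
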